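/- For every integer k ≥ 1 there exists a constant C > 1, depending only on k, with the following property. Let V, V' be Banach spaces, A ∈ L(V,V'), r ∈ (0,1], and let E ⊆ V be a k-dimensional subspace with E ∩ ker A = {0} and det(A|E) ≥ r V_k(A). Then c_i(A|_E) ≥ C^{-1} r c_i(A) for every 1 ≤ i ≤ k; in particular m(A|_E) ≥ C^{-1} r c_k(A) and ‖A|_E‖ ≥ C^{-1} r c_1(A). -/

import Mathlib

/-!
The proof compares both sides with a *greedy system* of an operator `A` (`IsGreedy`): vectors
`v 0, v 1, …` in the unit ball and functionals `φ n` of norm at most one norming `A (v n)`,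
where `v n` is
chosen in the common kernel `F n` of the functionals `φ l ∘ A`, `l < n`, so that `‖A (v n)‖` is at
least half of `‖A|_{F n}‖`. Put `a n = ‖A (v n)‖`. All constants below depend on `k` only.

* Since `F n` has codimension `n`, `c_{n+1}(A) ≤ 2 a n` (`IsGreedy.gelfand_le`). On the span of
  `v 0, …, v n` the operator is bounded below by a multiple of `a n`, and this span meets every
  subspace of codimension `n`; hence `a n ≤ 2 ^ (n + 2) c_{n+1}(A)` (`IsGreedy.le_gelfand`).
* In the coordinates `t ↦ ∑ j, t j • v j`, the unit ball of the span of `v 0, …, v (k - 1)` and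
  the preimage of the unit ball of its image under `A` each lie between two explicit boxes.
  Therefore `det(A|span)` agrees with `∏ l, a l` up to a constant (`IsGreedy.volume_bounds`).

Take a greedy system of `A`, with norms `b l`, and one of `A|_E`, with norms `a l`. The hypothesis
gives `r * ∏ l, b l ≤ K * ∏ l, a l`. As the span of the first `l + 1` greedy vectors of `A|_E`
meets the codimension-`l` subspace `F l` of `A`, also `a l ≤ 2 ^ (l + 3) * b l`. Cancelling the
factors with `l ≠ i` leaves `r * b i ≤ K' * a i`, which is the claim by the first item.
-/

open Metric Filter MeasureTheory Topology

noncomputable section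

section Defs

variable {V W : Type*} [NormedAddCommGroup V] [NormedSpace ℝ V]
  [NormedAddCommGroup W] [NormedSpace ℝ W]

/-- The operator norm of the restriction of `A` to the subspace `E`, `‖A|_E‖`. -/
noncomputable def restrNorm (A : V →L[ℝ] W) (E : Submodule ℝ V) : ℝ :=
  ‖A.comp E.subtypeL‖

/-- The minimal norm `m(A|_E) = inf {‖A v‖ : v ∈ E, ‖v‖ = 1}`. -/
noncomputable def minNorm (A : V →L[ℝ] W) (E : Submodule ℝ V) : ℝ :=
  sInf {r : ℝ | ∃ v ∈ E, ‖v‖ = 1 ∧ r = ‖A v‖}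

/-- `F` is a closed subspace of codimension `n`. -/
def ClosedCodim (F : Submodule ℝ V) (n : ℕ) : Prop :=
  IsClosed (F : Set V) ∧ FiniteDimensional ℝ (V ⧸ F) ∧ Module.finrank ℝ (V ⧸ F) = n

/-- The `k`-th Gelfand number of `A` (meaningful for `k ≥ 1`):
`c_k(A) = inf {‖A|_F‖ : F a closed subspace of codimension k - 1}`. -/
noncomputable def gelfand (k : ℕ) (A : V →L[ℝ] W) : ℝ :=
  sInf {r : ℝ | ∃ F : Submodule ℝ V, ClosedCodim F (k - 1) ∧ r = restrNorm A F}

/-- The unit sphere of a subspace. -/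
def subSphere (E : Submodule ℝ V) : Set V := {v : V | v ∈ E ∧ ‖v‖ = 1}

/-- Hausdorff distance between the unit spheres of two subspaces. -/
noncomputable def dHaus (E F : Submodule ℝ V) : ℝ :=
  Metric.hausdorffDist (subSphere E) (subSphere F)

/-- `π` is the (bounded) projection onto `E` parallel to `F`. -/
def IsProjOn (π : V →L[ℝ] V) (E F : Submodule ℝ V) : Prop :=
  (∀ v ∈ E, π v = v) ∧ (∀ v ∈ F, π v = 0)

open scoped Classical in
/-- The (unsigned) determinant `det(A|E)` of `A` restricted to a finite-dimensional
subspace `E`, defined as the ratio of the induced (Haar) volume of the image `A B_E`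
of the unit ball of `E` to that of the unit ball of `A E`; it equals `0` when `A|_E`
is not injective.  (The value of the ratio does not depend on the choice of linear
equivalence with `ℝ^k`, since any two such differ by a linear automorphism, which
rescales both volumes by the same factor.) -/
noncomputable def detOn (A : V →L[ℝ] W) (E : Submodule ℝ V) : ℝ :=
  if h : Nonempty ((↥(E.map A.toLinearMap)) ≃ₗ[ℝ] (Fin (Module.finrank ℝ ↥E) → ℝ)) then
    (volume (⇑h.some '' {w : ↥(E.map A.toLinearMap) | ∃ v ∈ E, ‖v‖ ≤ 1 ∧ A v = (w : W)})).toReal /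
      (volume (⇑h.some '' {w : ↥(E.map A.toLinearMap) | ‖(w : W)‖ ≤ 1})).toReal
  else 0

/-- `V_k(A)`: the maximal `k`-dimensional volume growth of `A`,
`V_k(A) = sup {det(A|E) : E ⊆ V a k-dimensional subspace}`. -/
noncomputable def volGrowth (k : ℕ) (A : V →L[ℝ] W) : ℝ :=
  sSup {r : ℝ | ∃ E : Submodule ℝ V, FiniteDimensional ℝ ↥E ∧ Module.finrank ℝ ↥E = k ∧
    r = detOn A E}

/-- `V_k(A|_G)`: maximal volume growth among `k`-dimensional subspaces of `G`. -/
noncomputable def volGrowthOn (k : ℕ) (A : V →L[ℝ] W) (G : Submodule ℝ V) : ℝ :=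
  sSup {r : ℝ | ∃ E : Submodule ℝ V, E ≤ G ∧ FiniteDimensional ℝ ↥E ∧
    Module.finrank ℝ ↥E = k ∧ r = detOn A E}

/-- `A : X × ℕ → L(V)` is a linear cocycle over `T`. -/
def IsCocycle {X : Type*} (T : X → X) (A : X → ℕ → (V →L[ℝ] V)) : Prop :=
  (∀ x, A x 0 = 1) ∧ ∀ x n m, A x (n + m) = (A (T^[m] x) n).comp (A x m)

/-- Continuity of a subspace-valued map with respect to the Hausdorff distance
between unit spheres. -/
def SubContinuous {X : Type*} [TopologicalSpace X] (𝓔 : X → Submodule ℝ V) : Prop :=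
  ∀ x : X, ∀ ε > (0 : ℝ), ∀ᶠ y in nhds x, dHaus (𝓔 x) (𝓔 y) < ε

end Defs

end

/-! ### Greedy systems -/

/-- A greedy system of `A`: each `v n` lies in the unit ball and in the common kernel of the
`φ l ∘ A` with `l < n`, and on that kernel `A` has norm at most `2 * ‖A (v n)‖`; the functional
`φ n`, of norm at most one, norms `A (v n)`. The sequences are infinite; `v n = 0` is allowed once
`A` vanishes on the kernel. -/
structure IsGreedy {V W : Type*} [NormedAddCommGroup V] [NormedSpace ℝ V]
    [NormedAddCommGroup W] [NormedSpace ℝ W] (A : V →L[ℝ] W) (v : ℕ → V)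
    (φ : ℕ → W →L[ℝ] ℝ) : Prop where
  norm_le : ∀ n, ‖v n‖ ≤ 1
  dual_le : ∀ n w, |φ n w| ≤ ‖w‖
  dual_self : ∀ n, φ n (A (v n)) = ‖A (v n)‖
  dual_zero : ∀ n, ∀ l < n, φ l (A (v n)) = 0
  near_max : ∀ n x, (∀ l < n, φ l (A x) = 0) → ‖A x‖ ≤ 2 * ‖A (v n)‖ * ‖x‖

section Greedy

variable {V W : Type*} [NormedAddCommGroup V] [NormedSpace ℝ V]
  [NormedAddCommGroup W] [NormedSpace ℝ W]

lemma exists_near_max (A : V →L[ℝ] W) (F : Submodule ℝ V) :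
    ∃ v ∈ F, ‖v‖ ≤ 1 ∧ ∀ x ∈ F, ‖A x‖ ≤ 2 * ‖A v‖ * ‖x‖ := by
  by_cases h : A.comp F.subtypeL = 0
  · refine ⟨0, F.zero_mem, by simp, fun x hx => ?_⟩
    have : A x = 0 := by simpa using congrArg (fun f => f ⟨x, hx⟩) h
    simp [this]
  · have hpos : 0 < ‖A.comp F.subtypeL‖ :=
      lt_of_le_of_ne (ContinuousLinearMap.opNorm_nonneg _) fun h0 =>
        h ((ContinuousLinearMap.opNorm_zero_iff _).1 h0.symm)
    obtain ⟨v, hv1, hv2⟩ :=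
      (A.comp F.subtypeL).exists_lt_apply_of_lt_opNorm (half_lt_self hpos)
    refine ⟨v, v.2, hv1.le, fun x hx => ?_⟩
    have h1 := (A.comp F.subtypeL).le_opNorm ⟨x, hx⟩
    simp only [ContinuousLinearMap.comp_apply, Submodule.subtypeL_apply, Submodule.coe_norm] at *
    refine h1.trans ?_
    gcongr
    linarith

lemma exists_isGreedy (A : V →L[ℝ] W) : ∃ v φ, IsGreedy A v φ := by
  choose x hxF hx1 hxm using exists_near_max A
  choose ψ hψ1 hψ2 using fun w : W => exists_dual_vector'' ℝ w
  let F : ℕ → Submodule ℝ V := fun n => Nat.rec ⊤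
    (fun _ G => G ⊓ LinearMap.ker ((ψ (A (x G))).comp A).toLinearMap) n
  have hF : ∀ n, F (n + 1) = F n ⊓ LinearMap.ker ((ψ (A (x (F n)))).comp A).toLinearMap :=
    fun n => rfl
  have hmem : ∀ n y, y ∈ F n ↔ ∀ l < n, ψ (A (x (F l))) (A y) = 0 := by
    intro n y
    induction n with
    | zero => simp [F]
    | succ n ih =>
      rw [hF, Submodule.mem_inf, ih, Nat.forall_lt_succ_right]
      simp
  refine ⟨fun n => x (F n), fun n => ψ (A (x (F n))), ⟨fun n => hx1 _, fun n w => ?_,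
    fun n => by simpa using hψ2 (A (x (F n))), fun n => (hmem n _).1 (hxF _),
    fun n y hy => hxm _ _ ((hmem n y).2 hy)⟩⟩
  have := (ψ (A (x (F n)))).le_opNorm w
  rw [Real.norm_eq_abs] at this
  exact this.trans (mul_le_of_le_one_left (norm_nonneg _) (hψ1 _))

variable {A : V →L[ℝ] W} {v : ℕ → V} {φ : ℕ → W →L[ℝ] ℝ}

lemma IsGreedy.le_two_mul (g : IsGreedy A v φ) {l n : ℕ} (h : l ≤ n) :
    ‖A (v n)‖ ≤ 2 * ‖A (v l)‖ :=
  (g.near_max l (v n) fun m hm => g.dual_zero n m (hm.trans_le h)).trans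
    (mul_le_of_le_one_right (by positivity) (g.norm_le n))

/-- Coordinates with respect to the images `A (v m)` are controlled by the norm in `W`: applying
`φ l` kills the terms with `m > l`, so the system is triangular and can be solved recursively. -/
lemma IsGreedy.coord_image (g : IsGreedy A v φ) (k : ℕ) (t : ℕ → ℝ) :
    ∀ l < k, |t l| * ‖A (v l)‖ ≤ 2 ^ l * ‖∑ m ∈ Finset.range k, t m • A (v m)‖ := by
  intro l
  induction l using Nat.strong_induction_on with
  | _ l ih =>
  intro hl
  set N := ‖∑ m ∈ Finset.range k, t m • A (v m)‖ with hN
  have h1 : φ l (∑ m ∈ Finset.range k, t m • A (v m))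
      = ∑ m ∈ Finset.range l, t m * φ l (A (v m)) + t l * ‖A (v l)‖ := by
    rw [map_sum, ← g.dual_self l, ← Finset.sum_range_succ (fun m => t m * φ l (A (v m)))]
    simp only [map_smul, smul_eq_mul]
    symm
    apply Finset.sum_subset
    · intro m; simp only [Finset.mem_range]; omega
    · intro m _ hm
      rw [g.dual_zero m l (by simpa using hm), mul_zero]
  have h2 : |∑ m ∈ Finset.range l, t m * φ l (A (v m))| ≤ (2 ^ l - 1) * N := by
    refine (Finset.abs_sum_le_sum_abs _ _).trans ?_
    have hg : ∑ m ∈ Finset.range l, (2 : ℝ) ^ m = 2 ^ l - 1 := by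
      have := geom_sum_mul (2 : ℝ) l
      linarith
    rw [← hg, Finset.sum_mul]
    refine Finset.sum_le_sum fun m hm => ?_
    have hm' := Finset.mem_range.1 hm
    rw [abs_mul]
    exact (mul_le_mul_of_nonneg_left (g.dual_le l _) (abs_nonneg _)).trans
      (ih m hm' (hm'.trans hl))
  have h3 := g.dual_le l (∑ m ∈ Finset.range k, t m • A (v m))
  rw [h1, ← hN] at h3
  have h4 : |t l| * ‖A (v l)‖ = |t l * ‖A (v l)‖| := by rw [abs_mul, abs_norm]
  rw [h4]
  have h5 := abs_sub (∑ m ∈ Finset.range l, t m * φ l (A (v m)) + t l * ‖A (v l)‖)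
    (∑ m ∈ Finset.range l, t m * φ l (A (v m)))
  rw [add_sub_cancel_left] at h5
  linarith

/-- Coordinates with respect to the vectors `v m` are controlled by the norm in `V`: the tail `u` of
the sum from index `l` on lies in the kernel on which `v l` is nearly maximal for `A`, and
`φ l (A u) = t l * ‖A (v l)‖`. -/
lemma IsGreedy.coord_domain (g : IsGreedy A v φ) (k : ℕ) (hpos : ∀ l < k, 0 < ‖A (v l)‖)
    (t : ℕ → ℝ) :
    ∀ l < k, |t l| ≤ 2 * 3 ^ l * ‖∑ m ∈ Finset.range k, t m • v m‖ := by
  intro l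
  induction l using Nat.strong_induction_on with
  | _ l ih =>
  intro hl
  set N := ‖∑ m ∈ Finset.range k, t m • v m‖ with hN
  have hsplit : ∑ m ∈ Finset.range l, t m • v m + ∑ m ∈ Finset.Ico l k, t m • v m
      = ∑ m ∈ Finset.range k, t m • v m := by
    rw [Finset.range_eq_Ico, Finset.range_eq_Ico]
    exact Finset.sum_Ico_consecutive _ (Nat.zero_le _) hl.le
  set u := ∑ m ∈ Finset.Ico l k, t m • v m with hu
  have hAu : ∀ j, φ j (A u) = ∑ m ∈ Finset.Ico l k, t m * φ j (A (v m)) := by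
    intro j; simp [hu, map_sum]
  have h0 : ∀ j < l, φ j (A u) = 0 := by
    intro j hj
    rw [hAu]
    refine Finset.sum_eq_zero fun m hm => ?_
    rw [g.dual_zero m j (hj.trans_le (Finset.mem_Ico.1 hm).1), mul_zero]
  have h1 : φ l (A u) = t l * ‖A (v l)‖ := by
    rw [hAu, Finset.sum_eq_single l, g.dual_self]
    · intro m hm hne
      rw [g.dual_zero m l (lt_of_le_of_ne (Finset.mem_Ico.1 hm).1 hne.symm), mul_zero]
    · intro h; exact absurd (Finset.mem_Ico.2 ⟨le_rfl, hl⟩) h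
  have h2 : ‖∑ m ∈ Finset.range l, t m • v m‖ ≤ (3 ^ l - 1) * N := by
    refine (norm_sum_le _ _).trans ?_
    have hg : ∑ m ∈ Finset.range l, 2 * (3 : ℝ) ^ m = 3 ^ l - 1 := by
      have := geom_sum_mul (3 : ℝ) l
      rw [← Finset.mul_sum]
      linarith
    rw [← hg, Finset.sum_mul]
    refine Finset.sum_le_sum fun m hm => ?_
    have hm' := Finset.mem_range.1 hm
    rw [norm_smul, Real.norm_eq_abs]
    exact (mul_le_of_le_one_right (abs_nonneg _) (g.norm_le m)).trans (ih m hm' (hm'.trans hl))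
  have h3 : ‖u‖ ≤ 3 ^ l * N := by
    have : u = ∑ m ∈ Finset.range k, t m • v m - ∑ m ∈ Finset.range l, t m • v m := by
      rw [← hsplit]; abel
    rw [this]
    refine (norm_sub_le _ _).trans ?_
    linarith
  have h4 : |t l| * ‖A (v l)‖ ≤ (2 * 3 ^ l * N) * ‖A (v l)‖ := by
    calc |t l| * ‖A (v l)‖ = |φ l (A u)| := by rw [h1, abs_mul, abs_norm]
      _ ≤ ‖A u‖ := g.dual_le _ _
      _ ≤ 2 * ‖A (v l)‖ * ‖u‖ := g.near_max l u h0
      _ ≤ 2 * ‖A (v l)‖ * (3 ^ l * N) := by gcongr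
      _ = _ := by ring
  exact le_of_mul_le_mul_right h4 (hpos l hl)

lemma sum_range_extend {M : Type*} [AddCommGroup M] [Module ℝ M] {k : ℕ} (t : Fin k → ℝ)
    (y : ℕ → M) :
    ∑ m ∈ Finset.range k, (if h : m < k then t ⟨m, h⟩ else 0) • y m = ∑ j : Fin k, t j • y j := by
  rw [Finset.sum_range]
  simp

lemma IsGreedy.coord_image_fin (g : IsGreedy A v φ) {k : ℕ} (t : Fin k → ℝ) (l : Fin k) :
    |t l| * ‖A (v l)‖ ≤ 2 ^ (l : ℕ) * ‖∑ j : Fin k, t j • A (v j)‖ := by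
  have := g.coord_image k (fun m => if h : m < k then t ⟨m, h⟩ else 0) l l.2
  rw [sum_range_extend t (fun m => A (v m))] at this
  simpa using this

lemma IsGreedy.coord_domain_fin (g : IsGreedy A v φ) {k : ℕ} (hpos : ∀ l < k, 0 < ‖A (v l)‖)
    (t : Fin k → ℝ) (l : Fin k) :
    |t l| ≤ 2 * 3 ^ (l : ℕ) * ‖∑ j : Fin k, t j • v j‖ := by
  have := g.coord_domain k hpos (fun m => if h : m < k then t ⟨m, h⟩ else 0) l l.2
  rw [sum_range_extend t v] at this
  simpa using this

lemma IsGreedy.linearIndependent (g : IsGreedy A v φ) {k : ℕ} (hpos : ∀ l < k, 0 < ‖A (v l)‖) :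
    LinearIndependent ℝ (fun j : Fin k => A (v j)) := by
  rw [Fintype.linearIndependent_iff]
  intro t ht l
  have := g.coord_image_fin t l
  rw [ht, norm_zero, mul_zero] at this
  have h0 : |t l| ≤ 0 := by
    by_contra! h
    exact absurd this (not_le.2 (mul_pos h (hpos l l.2)))
  exact abs_nonpos_iff.1 h0

/-- The restriction of `A` to the span of the first `n + 1` greedy vectors is bounded below by a
multiple of `‖A (v n)‖`, and this span meets every subspace of codimension at most `n`, here
presented as the kernel of `T`. -/
lemma IsGreedy.exists_ker_vector (g : IsGreedy A v φ) {n : ℕ} (hpos : ∀ l ≤ n, 0 < ‖A (v l)‖)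
    {M : Type*} [AddCommGroup M] [Module ℝ M] [FiniteDimensional ℝ M]
    (T : V →ₗ[ℝ] M) (hM : Module.finrank ℝ M ≤ n) :
    ∃ u : V, u ≠ 0 ∧ T u = 0 ∧ ‖A (v n)‖ * ‖u‖ ≤ 2 ^ (n + 2) * ‖A u‖ := by
  have hli := g.linearIndependent (k := n + 1) fun l hl => hpos l (by omega)
  let S : (Fin (n + 1) → ℝ) →ₗ[ℝ] V := Fintype.linearCombination ℝ (fun j : Fin (n + 1) => v j)
  have hker : LinearMap.ker (T ∘ₗ S) ≠ ⊥ :=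
    LinearMap.ker_ne_bot_of_finrank_lt (by simpa using Nat.lt_succ_of_le hM)
  obtain ⟨t, ht, ht0⟩ := Submodule.exists_mem_ne_zero_of_ne_bot hker
  have hS : S t = ∑ j, t j • v j := by simp [S, Fintype.linearCombination_apply]
  have hAS : A (S t) = ∑ j, t j • A (v j) := by simp [hS, map_sum]
  refine ⟨S t, fun h => ht0 ?_, by simpa using ht, ?_⟩
  · rw [h, map_zero] at hAS
    funext j
    exact Fintype.linearIndependent_iff.1 hli t hAS.symm j
  · have h1 : ∀ l : Fin (n + 1), ‖A (v n)‖ * |t l| ≤ 2 * 2 ^ (l : ℕ) * ‖A (S t)‖ := by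
      intro l
      have h2 := g.coord_image_fin t l
      rw [← hAS] at h2
      have h3 := mul_le_mul_of_nonneg_right (g.le_two_mul (Nat.lt_succ_iff.1 l.2))
        (abs_nonneg (t l))
      linarith
    calc ‖A (v n)‖ * ‖S t‖ ≤ ‖A (v n)‖ * ∑ l, |t l| := by
          gcongr
          rw [hS]
          refine (norm_sum_le _ _).trans (Finset.sum_le_sum fun l _ => ?_)
          rw [norm_smul, Real.norm_eq_abs]
          exact mul_le_of_le_one_right (abs_nonneg _) (g.norm_le _)
      _ = ∑ l, ‖A (v n)‖ * |t l| := Finset.mul_sum _ _ _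
      _ ≤ ∑ l : Fin (n + 1), 2 * 2 ^ (l : ℕ) * ‖A (S t)‖ := Finset.sum_le_sum fun l _ => h1 l
      _ = 2 * (2 ^ (n + 1) - 1) * ‖A (S t)‖ := by
          rw [← Finset.sum_mul, ← Finset.mul_sum,
            Fin.sum_univ_eq_sum_range (fun l => (2 : ℝ) ^ l) (n + 1)]
          have := geom_sum_mul (2 : ℝ) (n + 1)
          congr 2
          linarith
      _ ≤ 2 ^ (n + 2) * ‖A (S t)‖ := by
          gcongr
          rw [pow_succ (2 : ℝ) (n + 1)]
          linarith

/-- If `A` is injective on some `k`-dimensional subspace, the first `k` greedy vectors have nonzero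
image: such a subspace meets every common kernel of fewer than `k` functionals. -/
lemma IsGreedy.pos_of_injective (g : IsGreedy A v φ) {k : ℕ} (E : Submodule ℝ V)
    [FiniteDimensional ℝ E] (hE : Module.finrank ℝ E = k) (hA : ∀ x ∈ E, A x = 0 → x = 0) :
    ∀ l < k, 0 < ‖A (v l)‖ := by
  intro l hl
  by_contra! h
  let T : E →ₗ[ℝ] (Fin l → ℝ) :=
    LinearMap.pi fun j : Fin l => ((φ j).comp (A.comp E.subtypeL)).toLinearMap
  have hker : LinearMap.ker T ≠ ⊥ :=
    LinearMap.ker_ne_bot_of_finrank_lt (by simpa [hE] using hl)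
  obtain ⟨x, hx, hx0⟩ := Submodule.exists_mem_ne_zero_of_ne_bot hker
  have hm := g.near_max l x fun m hm => by
    simpa [T] using congrFun (LinearMap.mem_ker.1 hx) ⟨m, hm⟩
  have h0 : ‖A (v l)‖ = 0 := le_antisymm h (norm_nonneg _)
  rw [h0, mul_zero, zero_mul] at hm
  exact hx0 (Subtype.ext (hA x x.2 (norm_le_zero_iff.1 hm)))

/-! ### Greedy systems and Gelfand numbers -/

/-- The common kernel of the first `n` functionals `φ l ∘ A`. -/
def dualKer (A : V →L[ℝ] W) (φ : ℕ → W →L[ℝ] ℝ) (n : ℕ) : Submodule ℝ V :=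
  LinearMap.ker (LinearMap.pi fun j : Fin n => ((φ j).comp A).toLinearMap)

lemma mem_dualKer {n : ℕ} {x : V} : x ∈ dualKer A φ n ↔ ∀ l < n, φ l (A x) = 0 := by
  simp [dualKer, funext_iff, Fin.forall_iff]

/-- The matrix `φ l (A (v j))` is triangular with nonzero diagonal, so `φ 0 ∘ A, …, φ (n - 1) ∘ A`
together map onto `ℝ ^ n`. -/
lemma IsGreedy.closedCodim_dualKer (g : IsGreedy A v φ) {n : ℕ}
    (hpos : ∀ l < n, 0 < ‖A (v l)‖) : ClosedCodim (dualKer A φ n) n := by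
  set T : V →ₗ[ℝ] (Fin n → ℝ) :=
    LinearMap.pi fun j : Fin n => ((φ j).comp A).toLinearMap with hT
  have hsurj : Function.Surjective T := by
    let M : Matrix (Fin n) (Fin n) ℝ := fun l j => φ l (A (v j))
    have hdet : M.det = ∏ j, M j j := by
      apply Matrix.det_of_isLowerTriangular
      intro i j hij
      exact g.dual_zero j i hij
    have hunit : IsUnit M := by
      rw [Matrix.isUnit_iff_isUnit_det, hdet, isUnit_iff_ne_zero]
      refine Finset.prod_ne_zero_iff.2 fun j _ => ?_
      simp only [M, g.dual_self]
      exact (hpos j j.2).ne'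
    intro y
    obtain ⟨t, ht⟩ := Matrix.mulVec_surjective_iff_isUnit.2 hunit y
    refine ⟨∑ j, t j • v j, ?_⟩
    rw [← ht]
    funext l
    simp [hT, M, Matrix.mulVec, dotProduct, map_sum, mul_comm]
  have e : (V ⧸ dualKer A φ n) ≃ₗ[ℝ] (Fin n → ℝ) := T.quotKerEquivOfSurjective hsurj
  refine ⟨?_, e.symm.finiteDimensional, by rw [e.finrank_eq]; simp⟩
  have : (dualKer A φ n : Set V) = ⋂ l : Fin n, {x | φ l (A x) = 0} := by
    ext x; simp [mem_dualKer, Fin.forall_iff]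
  rw [this]
  exact isClosed_iInter fun l => isClosed_eq (by fun_prop) continuous_const

lemma restrNorm_nonneg (A : V →L[ℝ] W) (F : Submodule ℝ V) : 0 ≤ restrNorm A F :=
  ContinuousLinearMap.opNorm_nonneg _

lemma gelfand_nonneg (n : ℕ) (A : V →L[ℝ] W) : 0 ≤ gelfand n A :=
  Real.sInf_nonneg (by rintro _ ⟨F, -, rfl⟩; exact restrNorm_nonneg A F)

lemma gelfand_le {n : ℕ} {F : Submodule ℝ V} (h : ClosedCodim F n) {c : ℝ} (hc : 0 ≤ c)
    (hF : ∀ x ∈ F, ‖A x‖ ≤ c * ‖x‖) : gelfand (n + 1) A ≤ c := by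
  have h1 : restrNorm A F ≤ c :=
    ContinuousLinearMap.opNorm_le_bound _ hc fun x => hF x x.2
  refine le_trans (csInf_le ⟨0, ?_⟩ ⟨F, by simpa using h, rfl⟩) h1
  rintro _ ⟨G, -, rfl⟩
  exact restrNorm_nonneg A G

lemma IsGreedy.gelfand_le (g : IsGreedy A v φ) {n : ℕ} (hpos : ∀ l < n, 0 < ‖A (v l)‖) :
    gelfand (n + 1) A ≤ 2 * ‖A (v n)‖ :=
  _root_.gelfand_le (g.closedCodim_dualKer hpos) (by positivity)
    fun x hx => g.near_max n x (mem_dualKer.1 hx)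

lemma IsGreedy.le_gelfand (g : IsGreedy A v φ) {n : ℕ} (hpos : ∀ l ≤ n, 0 < ‖A (v l)‖) :
    ‖A (v n)‖ ≤ 2 ^ (n + 2) * gelfand (n + 1) A := by
  rw [← div_le_iff₀' (by positivity)]
  refine le_csInf ⟨_, dualKer A φ n, g.closedCodim_dualKer fun l hl => hpos l hl.le, rfl⟩ ?_
  rintro _ ⟨F, ⟨-, hfd, hF⟩, rfl⟩
  obtain ⟨u, hu0, huF, hu⟩ := g.exists_ker_vector hpos F.mkQ (by rw [hF]; simp)
  have huF' : u ∈ F := by simpa using huF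
  have h1 : ‖A u‖ ≤ restrNorm A F * ‖u‖ := (A.comp F.subtypeL).le_opNorm ⟨u, huF'⟩
  rw [div_le_iff₀' (by positivity)]
  have h2 : ‖A (v n)‖ * ‖u‖ ≤ (2 ^ (n + 2) * restrNorm A F) * ‖u‖ := by
    rw [mul_assoc]
    exact hu.trans (by gcongr)
  exact le_of_mul_le_mul_right h2 (norm_pos_iff.2 hu0)

end Greedy

/-! ### Determinants in greedy coordinates -/

section Volume

variable {V W : Type*} [NormedAddCommGroup V] [NormedSpace ℝ V]
  [NormedAddCommGroup W] [NormedSpace ℝ W]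

lemma volume_ratio_equiv {X : Type*} [AddCommGroup X] [Module ℝ X] {k : ℕ}
    (L L₂ : X ≃ₗ[ℝ] (Fin k → ℝ)) (S T : Set X) :
    (volume (L '' S)).toReal / (volume (L '' T)).toReal =
      (volume (L₂ '' S)).toReal / (volume (L₂ '' T)).toReal := by
  set e := L.symm.trans L₂ with he
  have him : ∀ S : Set X, L₂ '' S = (e : (Fin k → ℝ) →ₗ[ℝ] (Fin k → ℝ)) '' (L '' S) := by
    intro S
    rw [Set.image_image]
    simp [he]
  have hdet : |LinearMap.det (e : (Fin k → ℝ) →ₗ[ℝ] (Fin k → ℝ))| ≠ 0 :=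
    abs_ne_zero.2 (LinearEquiv.isUnit_det' e).ne_zero
  rw [him S, him T, Measure.addHaar_image_linearMap, Measure.addHaar_image_linearMap,
    ENNReal.toReal_mul, ENNReal.toReal_mul, ENNReal.toReal_ofReal (abs_nonneg _),
    mul_div_mul_left _ _ hdet]

/-- The linear equivalence chosen in `detOn` may be replaced by any other one. -/
lemma detOn_eq_of_equiv (A : V →L[ℝ] W) (E : Submodule ℝ V) {k : ℕ}
    (hk : Module.finrank ℝ E = k) (L : E.map A.toLinearMap ≃ₗ[ℝ] (Fin k → ℝ)) :
    detOn A E =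
      (volume (L '' {w | ∃ v ∈ E, ‖v‖ ≤ 1 ∧ A v = (w : W)})).toReal /
        (volume (L '' {w | ‖(w : W)‖ ≤ 1})).toReal := by
  subst hk
  have h : Nonempty ((↥(E.map A.toLinearMap)) ≃ₗ[ℝ] (Fin (Module.finrank ℝ ↥E) → ℝ)) := ⟨L⟩
  rw [detOn, dif_pos h]
  exact volume_ratio_equiv _ _ _ _

/-- If the `A (v j)` are independent, `det(A|span v)` can be computed in the coordinates
`t ↦ ∑ j, t j • A (v j)` of the image. -/
lemma detOn_span (A : V →L[ℝ] W) {k : ℕ} (v : Fin k → V)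
    (hv : LinearIndependent ℝ fun j => A (v j)) (E : Submodule ℝ V)
    (hE : E = Submodule.span ℝ (Set.range v)) :
    detOn A E = (volume {t : Fin k → ℝ | ‖∑ j, t j • v j‖ ≤ 1}).toReal /
      (volume {t : Fin k → ℝ | ‖∑ j, t j • A (v j)‖ ≤ 1}).toReal := by
  have hv' : LinearIndependent ℝ v := LinearIndependent.of_comp A.toLinearMap hv
  have hfin : Module.finrank ℝ E = k := by
    rw [hE, finrank_span_eq_card hv', Fintype.card_fin]
  have hmap : Submodule.span ℝ (Set.range fun j => A (v j)) = E.map A.toLinearMap := by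
    rw [hE, Submodule.map_span, ← Set.range_comp]; rfl
  let L : E.map A.toLinearMap ≃ₗ[ℝ] (Fin k → ℝ) :=
    (LinearEquiv.ofEq _ _ hmap.symm).trans (Module.Basis.span hv).equivFun
  have hL : ∀ t, ((L.symm t : E.map A.toLinearMap) : W) = ∑ j, t j • A (v j) := by
    intro t
    simp [L, Module.Basis.equivFun_symm_apply, Module.Basis.span_apply]
  rw [detOn_eq_of_equiv A E hfin L, LinearEquiv.image_eq_preimage_symm,
    LinearEquiv.image_eq_preimage_symm]
  congr 3
  · ext t
    simp only [Set.mem_preimage, Set.mem_ofPred_eq, hL]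
    constructor
    · rintro ⟨x, hxE, hx1, hx⟩
      rw [hE] at hxE
      obtain ⟨s, rfl⟩ := (Submodule.mem_span_range_iff_exists_fun ℝ).1 hxE
      have hst : s = t := by
        have h0 : ∑ j, (s j - t j) • A (v j) = 0 := by
          simp only [sub_smul, Finset.sum_sub_distrib]
          rw [← hx]; simp [map_sum]
        funext j
        exact sub_eq_zero.1 (Fintype.linearIndependent_iff.1 hv _ h0 j)
      rwa [← hst]
    · intro ht
      refine ⟨_, ?_, ht, by simp [map_sum]⟩
      rw [hE]
      exact (Submodule.mem_span_range_iff_exists_fun ℝ).2 ⟨t, rfl⟩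
  · ext t
    simp only [Set.mem_preimage, Set.mem_ofPred_eq, hL]

lemma volume_box {k : ℕ} (c : Fin k → ℝ) (hc : ∀ j, 0 ≤ c j) :
    (volume (Set.Icc (fun j => -c j) c)).toReal = ∏ j, (2 * c j) := by
  rw [Real.volume_Icc_pi_toReal (fun j => by linarith [hc j])]
  exact Finset.prod_congr rfl fun j _ => by ring

lemma volume_le_box {k : ℕ} (S : Set (Fin k → ℝ)) (c : Fin k → ℝ) (hc : ∀ j, 0 ≤ c j)
    (h : ∀ t ∈ S, ∀ j, |t j| ≤ c j) :
    volume S ≠ ⊤ ∧ (volume S).toReal ≤ ∏ j, (2 * c j) := by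
  have hsub : S ⊆ Set.Icc (fun j => -c j) c := fun t ht =>
    ⟨fun j => (abs_le.1 (h t ht j)).1, fun j => (abs_le.1 (h t ht j)).2⟩
  have hfin : volume (Set.Icc (fun j => -c j) c) ≠ ⊤ := isCompact_Icc.measure_lt_top.ne
  refine ⟨ne_top_of_le_ne_top hfin (measure_mono hsub), ?_⟩
  rw [← volume_box c hc]
  exact ENNReal.toReal_mono hfin (measure_mono hsub)

lemma box_le_volume {k : ℕ} (S : Set (Fin k → ℝ)) (hS : volume S ≠ ⊤) (c : Fin k → ℝ)
    (hc : ∀ j, 0 ≤ c j) (h : ∀ t : Fin k → ℝ, (∀ j, |t j| ≤ c j) → t ∈ S) :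
    ∏ j, (2 * c j) ≤ (volume S).toReal := by
  have hsub : Set.Icc (fun j => -c j) c ⊆ S := fun t ht =>
    h t fun j => abs_le.2 ⟨ht.1 j, ht.2 j⟩
  rw [← volume_box c hc]
  exact ENNReal.toReal_mono hS (measure_mono hsub)

lemma norm_sum_smul_le_one {X : Type*} [NormedAddCommGroup X] [NormedSpace ℝ X] {k : ℕ}
    (hk : 1 ≤ k) (x : Fin k → X) (t : Fin k → ℝ) (h : ∀ j, |t j| * ‖x j‖ ≤ 1 / k) :
    ‖∑ j, t j • x j‖ ≤ 1 := by
  have hk0 : (0 : ℝ) < k := by exact_mod_cast hk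
  calc ‖∑ j, t j • x j‖ ≤ ∑ j, |t j| * ‖x j‖ := by
        refine (norm_sum_le _ _).trans (Finset.sum_le_sum fun j _ => ?_)
        rw [norm_smul, Real.norm_eq_abs]
    _ ≤ ∑ _j : Fin k, (1 / k : ℝ) := Finset.sum_le_sum fun j _ => h j
    _ = 1 := by simp [hk0.ne']

variable {A : V →L[ℝ] W} {v : ℕ → V} {φ : ℕ → W →L[ℝ] ℝ}

/-- In greedy coordinates both unit balls are squeezed between boxes, so their volume ratio is
comparable to `∏ l, ‖A (v l)‖`. -/
lemma IsGreedy.volume_bounds (g : IsGreedy A v φ) {k : ℕ} (hk : 1 ≤ k)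
    (hpos : ∀ l < k, 0 < ‖A (v l)‖) :
    (∏ l : Fin k, ‖A (v l)‖ / (k * 2 ^ (l : ℕ)) ≤
      (volume {t : Fin k → ℝ | ‖∑ j, t j • v j‖ ≤ 1}).toReal /
        (volume {t : Fin k → ℝ | ‖∑ j, t j • A (v j)‖ ≤ 1}).toReal) ∧
    (volume {t : Fin k → ℝ | ‖∑ j, t j • v j‖ ≤ 1}).toReal /
        (volume {t : Fin k → ℝ | ‖∑ j, t j • A (v j)‖ ≤ 1}).toReal ≤
      ∏ l : Fin k, (2 * 3 ^ (l : ℕ) * k * ‖A (v l)‖) := by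
  have hk0 : (0 : ℝ) < k := by exact_mod_cast hk
  have hp : ∀ l : Fin k, 0 < ‖A (v l)‖ := fun l => hpos l l.2
  set S := {t : Fin k → ℝ | ‖∑ j, t j • v j‖ ≤ 1} with hS
  set T := {t : Fin k → ℝ | ‖∑ j, t j • A (v j)‖ ≤ 1} with hT
  obtain ⟨hSfin, hSle⟩ := volume_le_box S (fun l => 2 * 3 ^ (l : ℕ)) (fun l => by positivity)
    fun t ht l => (g.coord_domain_fin hpos t l).trans (mul_le_of_le_one_right (by positivity) ht)
  obtain ⟨hTfin, hTle⟩ := volume_le_box T (fun l => 2 ^ (l : ℕ) / ‖A (v l)‖)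
    (fun l => by positivity) fun t ht l => by
      rw [le_div_iff₀ (hp l)]
      exact (g.coord_image_fin t l).trans (mul_le_of_le_one_right (by positivity) ht)
  have hSge := box_le_volume S hSfin (fun _ => 1 / k) (fun _ => by positivity) fun t ht =>
    norm_sum_smul_le_one hk _ t fun j =>
      (mul_le_of_le_one_right (abs_nonneg _) (g.norm_le j)).trans (ht j)
  have hTge := box_le_volume T hTfin (fun l => 1 / k / ‖A (v l)‖) (fun l => by positivity)
    fun t ht => norm_sum_smul_le_one hk _ t fun j => (le_div_iff₀ (hp j)).1 (ht j)
  have hTpos : 0 < (volume T).toReal :=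
    lt_of_lt_of_le (Finset.prod_pos fun l _ => by have := hp l; positivity) hTge
  constructor
  · rw [le_div_iff₀ hTpos]
    calc _ ≤ (∏ l : Fin k, ‖A (v l)‖ / (k * 2 ^ (l : ℕ))) *
          ∏ l : Fin k, (2 * (2 ^ (l : ℕ) / ‖A (v l)‖)) := by gcongr
      _ = ∏ l : Fin k, (2 * (1 / (k : ℝ))) := by
          rw [← Finset.prod_mul_distrib]
          refine Finset.prod_congr rfl fun l _ => ?_
          have := (hp l).ne'
          field_simp
      _ ≤ _ := hSge
  · rw [div_le_iff₀ hTpos]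
    calc _ ≤ ∏ l : Fin k, (2 * (2 * 3 ^ (l : ℕ)) : ℝ) := hSle
      _ = (∏ l : Fin k, (2 * 3 ^ (l : ℕ) * k * ‖A (v l)‖)) *
          ∏ l : Fin k, (2 * (1 / k / ‖A (v l)‖)) := by
          rw [← Finset.prod_mul_distrib]
          refine Finset.prod_congr rfl fun l _ => ?_
          have := (hp l).ne'
          field_simp
      _ ≤ _ := by gcongr

lemma IsGreedy.detOn_span_ge (g : IsGreedy A v φ) {k : ℕ} (hk : 1 ≤ k)
    (hpos : ∀ l < k, 0 < ‖A (v l)‖) :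
    ∏ l : Fin k, ‖A (v l)‖ / (k * 2 ^ (l : ℕ)) ≤
      detOn A (Submodule.span ℝ (Set.range fun j : Fin k => v j)) := by
  rw [detOn_span A _ (g.linearIndependent hpos) _ rfl]
  exact (g.volume_bounds hk hpos).1

lemma IsGreedy.detOn_le {E : Submodule ℝ V} {v : ℕ → E} [FiniteDimensional ℝ E]
    (g : IsGreedy (A.comp E.subtypeL) v φ) {k : ℕ} (hk : 1 ≤ k) (hE : Module.finrank ℝ E = k)
    (hpos : ∀ l < k, 0 < ‖A (v l)‖) :
    detOn A E ≤ ∏ l : Fin k, (2 * 3 ^ (l : ℕ) * k * ‖A (v l)‖) := by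
  have hli : LinearIndependent ℝ fun j : Fin k => A (v j) := g.linearIndependent hpos
  have hli' : LinearIndependent ℝ fun j : Fin k => (v j : V) :=
    LinearIndependent.of_comp A.toLinearMap hli
  have hspan : Submodule.span ℝ (Set.range fun j : Fin k => (v j : V)) = E := by
    refine Submodule.eq_of_le_of_finrank_eq (Submodule.span_le.2 ?_) ?_
    · rintro _ ⟨j, rfl⟩; exact (v j).2
    · rw [finrank_span_eq_card hli', hE, Fintype.card_fin]
  rw [detOn_span A _ hli _ hspan.symm]
  have h := (g.volume_bounds hk hpos).2
  have hn : ∀ t : Fin k → ℝ, ‖∑ j, t j • v j‖ = ‖∑ j, t j • (v j : V)‖ := by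
    intro t; rw [Submodule.coe_norm]; simp
  simp only [hn] at h
  exact h

/-- A bound uniform in `E`; it makes the supremum defining `volGrowth` a genuine one. -/
lemma detOn_le_bound (A : V →L[ℝ] W) {k : ℕ} (hk : 1 ≤ k) (E : Submodule ℝ V)
    [FiniteDimensional ℝ E] (hE : Module.finrank ℝ E = k) :
    detOn A E ≤ ∏ l : Fin k, (2 * 3 ^ (l : ℕ) * k * ‖A‖) := by
  by_cases hA : ∀ x ∈ E, A x = 0 → x = 0
  · obtain ⟨v, φ, g⟩ := exists_isGreedy (A.comp E.subtypeL)
    have hpos := g.pos_of_injective ⊤ (by rw [finrank_top, hE]) fun x _ hx =>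
      Subtype.ext (hA x x.2 hx)
    refine (g.detOn_le hk hE hpos).trans ?_
    gcongr with l
    exact (A.le_opNorm _).trans (mul_le_of_le_one_right (norm_nonneg _) (g.norm_le l))
  · have : ¬ Nonempty ((↥(E.map A.toLinearMap)) ≃ₗ[ℝ] (Fin (Module.finrank ℝ ↥E) → ℝ)) := by
      rintro ⟨L⟩
      apply hA
      have h1 := L.finrank_eq
      rw [Module.finrank_fin_fun] at h1
      have h2 := LinearMap.finrank_range_add_finrank_ker (A.toLinearMap.domRestrict E)
      rw [LinearMap.range_domRestrict, h1] at h2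
      have h3 : LinearMap.ker (A.toLinearMap.domRestrict E) = ⊥ :=
        Submodule.finrank_eq_zero.1 (by omega)
      intro x hx hx0
      have h4 : (⟨x, hx⟩ : E) ∈ LinearMap.ker (A.toLinearMap.domRestrict E) := by simpa using hx0
      rw [h3, Submodule.mem_bot] at h4
      exact congrArg Subtype.val h4
    rw [detOn, dif_neg this]
    positivity

lemma IsGreedy.volGrowth_ge (g : IsGreedy A v φ) {k : ℕ} (hk : 1 ≤ k)
    (hpos : ∀ l < k, 0 < ‖A (v l)‖) :
    ∏ l : Fin k, ‖A (v l)‖ / (k * 2 ^ (l : ℕ)) ≤ volGrowth k A := by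
  refine (g.detOn_span_ge hk hpos).trans (le_csSup ⟨∏ l : Fin k, (2 * 3 ^ (l : ℕ) * k * ‖A‖), ?_⟩
    ⟨_, FiniteDimensional.span_of_finite ℝ (Set.finite_range _), ?_, rfl⟩)
  · rintro _ ⟨E, _, hE, rfl⟩
    exact detOn_le_bound A hk E hE
  · rw [finrank_span_eq_card, Fintype.card_fin]
    exact LinearIndependent.of_comp A.toLinearMap (g.linearIndependent hpos)

end Volume

/-! ### Comparison of the two greedy systems -/

/-- Cancellation of all factors but the `i`-th in an inequality between products. -/
lemma le_of_prod_le {k : ℕ} (a b : Fin k → ℝ) (d : Fin k → ℝ) (r K : ℝ)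
    (hb : ∀ j, 0 < b j) (ha : ∀ j, 0 < a j) (hK : 0 ≤ K) (hd : ∀ j, 1 ≤ d j)
    (hab : ∀ j, a j ≤ d j * b j) (h : r * ∏ j, b j ≤ K * ∏ j, a j) (i : Fin k) :
    r * b i ≤ K * (∏ j, d j) * a i := by
  have hP : 0 < ∏ j ∈ Finset.univ.erase i, b j := Finset.prod_pos fun j _ => hb j
  refine le_of_mul_le_mul_right ?_ hP
  have hd' : ∏ j ∈ Finset.univ.erase i, d j ≤ ∏ j, d j := by
    rw [← Finset.mul_prod_erase _ d (Finset.mem_univ i)]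
    exact le_mul_of_one_le_left (Finset.prod_nonneg fun j _ => by linarith [hd j]) (hd i)
  have ha' : ∏ j ∈ Finset.univ.erase i, a j ≤
      (∏ j, d j) * ∏ j ∈ Finset.univ.erase i, b j := by
    calc _ ≤ ∏ j ∈ Finset.univ.erase i, (d j * b j) :=
          Finset.prod_le_prod (fun j _ => (ha j).le) fun j _ => hab j
      _ = (∏ j ∈ Finset.univ.erase i, d j) * ∏ j ∈ Finset.univ.erase i, b j :=
          Finset.prod_mul_distrib
      _ ≤ _ := by gcongr
  calc r * b i * ∏ j ∈ Finset.univ.erase i, b j = r * ∏ j, b j := by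
        rw [mul_assoc, Finset.mul_prod_erase _ b (Finset.mem_univ i)]
    _ ≤ K * ∏ j, a j := h
    _ = K * (a i * ∏ j ∈ Finset.univ.erase i, a j) := by
        rw [Finset.mul_prod_erase _ a (Finset.mem_univ i)]
    _ ≤ K * (a i * ((∏ j, d j) * ∏ j ∈ Finset.univ.erase i, b j)) := by
        have := (ha i).le
        gcongr
    _ = _ := by ring

section Main

variable {V W : Type*} [NormedAddCommGroup V] [NormedSpace ℝ V]
  [NormedAddCommGroup W] [NormedSpace ℝ W]

lemma gelfand_le_of_volume (k : ℕ) (hk : 1 ≤ k) (A : V →L[ℝ] W) (r : ℝ) (hr : 0 < r)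
    (E : Submodule ℝ V) [FiniteDimensional ℝ E] (hE : Module.finrank ℝ E = k)
    (hA : ∀ x ∈ E, A x = 0 → x = 0) (hvol : r * volGrowth k A ≤ detOn A E)
    (n : ℕ) (hn : n < k) :
    r * gelfand (n + 1) A ≤ (2 * ((∏ l : Fin k, (2 * 6 ^ (l : ℕ) * k ^ 2 : ℝ)) *
      ∏ l : Fin k, (2 ^ ((l : ℕ) + 3) : ℝ)) * 2 ^ (k + 1)) *
        gelfand (n + 1) (A.comp E.subtypeL) := by
  have hk0 : (0 : ℝ) < k := by exact_mod_cast hk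
  obtain ⟨x, φ, g⟩ := exists_isGreedy A
  obtain ⟨y, ψ, q⟩ := exists_isGreedy (A.comp E.subtypeL)
  have hx := g.pos_of_injective E hE hA
  have hy := q.pos_of_injective ⊤ (by rw [finrank_top, hE]) fun z _ hz =>
    Subtype.ext (hA z z.2 hz)
  -- The vector `u` lies in the span of the first `j + 1` greedy vectors of `A|_E` and in the common
  -- kernel on which `x j` is nearly maximal for `A`.
  have hab : ∀ j : Fin k, ‖A (y j)‖ ≤ 2 ^ ((j : ℕ) + 3) * ‖A (x j)‖ := by
    intro j
    obtain ⟨u, hu0, huT, hu⟩ := q.exists_ker_vector (n := j) (fun l hl => hy l (hl.trans_lt j.2))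
      (LinearMap.pi fun l : Fin j => ((φ l).comp (A.comp E.subtypeL)).toLinearMap) (by simp)
    have h1 : ‖A u‖ ≤ 2 * ‖A (x j)‖ * ‖u‖ := g.near_max j u fun l hl => by
      simpa using congrFun huT ⟨l, hl⟩
    refine le_of_mul_le_mul_right (a := ‖u‖) ?_ (norm_pos_iff.2 hu0)
    calc ‖A (y j)‖ * ‖u‖ ≤ 2 ^ ((j : ℕ) + 2) * ‖A u‖ := hu
      _ ≤ 2 ^ ((j : ℕ) + 2) * (2 * ‖A (x j)‖ * ‖u‖) := by gcongr
      _ = _ := by ring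
  have hprod : r * ∏ j : Fin k, ‖A (x j)‖ ≤
      (∏ l : Fin k, (2 * 6 ^ (l : ℕ) * k ^ 2 : ℝ)) * ∏ j : Fin k, ‖A (y j)‖ := by
    have h1 : r * ∏ l : Fin k, ‖A (x l)‖ / (k * 2 ^ (l : ℕ)) ≤
        ∏ l : Fin k, (2 * 3 ^ (l : ℕ) * k * ‖A (y l)‖) :=
      (mul_le_mul_of_nonneg_left (g.volGrowth_ge hk hx) hr.le).trans
        (hvol.trans (q.detOn_le hk hE hy))
    calc r * ∏ j : Fin k, ‖A (x j)‖
        = (r * ∏ l : Fin k, ‖A (x l)‖ / (k * 2 ^ (l : ℕ))) * ∏ l : Fin k, (k * 2 ^ (l : ℕ) : ℝ) := by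
          rw [mul_assoc, ← Finset.prod_mul_distrib]
          congr 1
          refine Finset.prod_congr rfl fun l _ => ?_
          field_simp
      _ ≤ (∏ l : Fin k, (2 * 3 ^ (l : ℕ) * k * ‖A (y l)‖)) * ∏ l : Fin k, (k * 2 ^ (l : ℕ) : ℝ) := by
          gcongr
      _ = _ := by
          rw [← Finset.prod_mul_distrib, ← Finset.prod_mul_distrib]
          refine Finset.prod_congr rfl fun l _ => ?_
          rw [show (6 : ℝ) = 3 * 2 by norm_num, mul_pow]
          ring
  have hi := le_of_prod_le (fun j : Fin k => ‖A (y j)‖) (fun j : Fin k => ‖A (x j)‖)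
    (fun j : Fin k => 2 ^ ((j : ℕ) + 3)) r _ (fun j => hx j j.2) (fun j => hy j j.2)
    (by positivity) (fun j => one_le_pow₀ (by norm_num)) hab hprod ⟨n, hn⟩
  have hG := g.gelfand_le (n := n) fun l hl => hx l (hl.trans hn)
  have hH : ‖A (y n)‖ ≤ 2 ^ (n + 2) * gelfand (n + 1) (A.comp E.subtypeL) :=
    q.le_gelfand fun l hl => hy l (hl.trans_lt hn)
  have hnn : 0 ≤ gelfand (n + 1) (A.comp E.subtypeL) := gelfand_nonneg _ _
  set K := (∏ l : Fin k, (2 * 6 ^ (l : ℕ) * k ^ 2 : ℝ)) *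
      ∏ l : Fin k, (2 ^ ((l : ℕ) + 3) : ℝ) with hK
  have hK0 : 0 ≤ K := by positivity
  simp only at hi
  calc r * gelfand (n + 1) A ≤ r * (2 * ‖A (x n)‖) := by gcongr
    _ = 2 * (r * ‖A (x n)‖) := by ring
    _ ≤ 2 * (K * ‖A (y n)‖) := by gcongr
    _ ≤ 2 * (K * (2 ^ (n + 2) * gelfand (n + 1) (A.comp E.subtypeL))) := by gcongr
    _ ≤ 2 * (K * (2 ^ (k + 1) * gelfand (n + 1) (A.comp E.subtypeL))) := by
        gcongr 2 * (K * (?_ * _))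
        exact pow_le_pow_right₀ (by norm_num) (by omega)
    _ = _ := by ring

/-- The line through a unit vector `v` has codimension `k - 1` in `E`, and the norm of `A` on it is
`‖A v‖`. -/
lemma gelfand_restrict_le_minNorm (A : V →L[ℝ] W) (E : Submodule ℝ V) [FiniteDimensional ℝ E]
    {k : ℕ} (hk : 1 ≤ k) (hE : Module.finrank ℝ E = k) :
    gelfand k (A.comp E.subtypeL) ≤ minNorm A E := by
  obtain ⟨n, rfl⟩ : ∃ n, k = n + 1 := ⟨k - 1, by omega⟩
  have : Nontrivial E := Module.nontrivial_of_finrank_pos (R := ℝ) (by omega)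
  obtain ⟨u, hu⟩ := exists_norm_eq E zero_le_one
  refine le_csInf ⟨_, u, u.2, hu, rfl⟩ ?_
  rintro _ ⟨v, hvE, hv, rfl⟩
  have hv0 : (⟨v, hvE⟩ : E) ≠ 0 := fun h => by
    rw [show v = 0 from congrArg Subtype.val h, norm_zero] at hv
    exact zero_ne_one hv
  refine gelfand_le (F := Submodule.span ℝ {(⟨v, hvE⟩ : E)})
    ⟨Submodule.closed_of_finiteDimensional _, inferInstance, ?_⟩ (norm_nonneg _) ?_
  · have := Submodule.finrank_quotient_add_finrank (Submodule.span ℝ {(⟨v, hvE⟩ : E)})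
    rw [finrank_span_singleton hv0, hE] at this
    omega
  · intro x hx
    obtain ⟨c, rfl⟩ := Submodule.mem_span_singleton.1 hx
    simp [norm_smul, hv, mul_comm]

lemma gelfand_restrict_le_restrNorm (A : V →L[ℝ] W) (E : Submodule ℝ V) :
    gelfand 1 (A.comp E.subtypeL) ≤ restrNorm A E := by
  refine gelfand_le (n := 0) (F := ⊤) ⟨isClosed_univ, inferInstance, ?_⟩ (restrNorm_nonneg A E)
    fun x _ => (A.comp E.subtypeL).le_opNorm x
  exact Module.finrank_zero_of_subsingleton

end Main

universe u v

/-- **Lemma (Gelfand numbers of a restriction realizing a proportion of the maximal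
volume growth; beginning of the proof of Proposition 2.10).**
Here `A.comp E.subtypeL : E →L[ℝ] W` is the restriction `A|_E`. -/
theorem gelfand_numbers_of_volume_realizing_subspace :
    ∀ k : ℕ, 1 ≤ k →
    ∃ C : ℝ, 1 < C ∧
    ∀ (V : Type u) (W : Type v),
    ∀ (_ : NormedAddCommGroup V) (_ : NormedSpace ℝ V) (_ : CompleteSpace V)
      (_ : NormedAddCommGroup W) (_ : NormedSpace ℝ W) (_ : CompleteSpace W),
    ∀ (A : V →L[ℝ] W) (r : ℝ), r ∈ Set.Ioc (0:ℝ) 1 →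
    ∀ E : Submodule ℝ V,
      FiniteDimensional ℝ ↥E → Module.finrank ℝ ↥E = k →
      E ⊓ LinearMap.ker A.toLinearMap = ⊥ →
      r * volGrowth k A ≤ detOn A E →
      (∀ i : ℕ, 1 ≤ i → i ≤ k →
        C⁻¹ * r * gelfand i A ≤ gelfand i (A.comp E.subtypeL)) ∧
      C⁻¹ * r * gelfand k A ≤ minNorm A E ∧
      C⁻¹ * r * gelfand 1 A ≤ restrNorm A E := by
  intro k hk
  set K : ℝ := 2 * ((∏ l : Fin k, (2 * 6 ^ (l : ℕ) * k ^ 2 : ℝ)) *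
      ∏ l : Fin k, (2 ^ ((l : ℕ) + 3) : ℝ)) * 2 ^ (k + 1) with hK
  have hK0 : 0 ≤ K := by positivity
  -- Adding `2` to the constant ensures `1 < C`.
  refine ⟨K + 2, by linarith, ?_⟩
  intro V W _ _ _ _ _ _ A r hr E _ hE hker hvol
  have hA : ∀ x ∈ E, A x = 0 → x = 0 := by
    intro x hx hx0
    have : x ∈ E ⊓ LinearMap.ker A.toLinearMap := ⟨hx, hx0⟩
    rwa [hker, Submodule.mem_bot] at this
  have key : ∀ i : ℕ, 1 ≤ i → i ≤ k →
      (K + 2)⁻¹ * r * gelfand i A ≤ gelfand i (A.comp E.subtypeL) := by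
    intro i hi1 hik
    obtain ⟨n, rfl⟩ : ∃ n, i = n + 1 := ⟨i - 1, by omega⟩
    have h := gelfand_le_of_volume k hk A r hr.1 E hE hA hvol n (by omega)
    have hnn : 0 ≤ gelfand (n + 1) (A.comp E.subtypeL) := gelfand_nonneg _ _
    rw [mul_assoc, inv_mul_le_iff₀ (by linarith)]
    refine h.trans ?_
    rw [← hK]
    gcongr
    linarith
  exact ⟨key, (key k hk le_rfl).trans (gelfand_restrict_le_minNorm A E hk hE),
    (key 1 le_rfl hk).trans (gelfand_restrict_le_restrNorm A E)⟩
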